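/- For α ∈ (-1/2, 0) ∪ (0, 1/2), the normalizing constant satisfies the closed form Γ_α² = (√π · Γ(1+α) / (2^{2α+1} Γ(3/2+α))) · (sec(πα)(a² + b²) − 2ab), where Γ_α² = ∫_ℝ (q_α(y-1) - q_α(y))² dy and q_α(x) = (a·1{x ≥ 0} + b·1{x < 0})|x|^α. -/

import Mathlib

open Real MeasureTheory

noncomputable def qCusp (a b α : ℝ) (x : ℝ) : ℝ :=
  (if 0 ≤ x then a else b) * |x| ^ α

open Set Filter Topology

theorem intervalIntegrable_rpow_mul_one_sub_rpow {p q : ℝ} (hp : -1 < p) (hq : -1 < q) :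
    IntervalIntegrable (fun x : ℝ => x ^ p * (1 - x) ^ q) volume 0 1 := by
  have h := Complex.betaIntegral_convergent (u := ((p + 1 : ℝ) : ℂ)) (v := ((q + 1 : ℝ) : ℂ))
    (by rw [Complex.ofReal_re]; linarith) (by rw [Complex.ofReal_re]; linarith)
  rw [intervalIntegrable_iff_integrableOn_Ioc_of_le zero_le_one] at h ⊢
  refine h.re.congr ?_
  filter_upwards [ae_restrict_mem measurableSet_Ioc] with x hx
  have hx' : (0 : ℝ) ≤ 1 - x := by linarith [hx.2]
  have e : (x : ℂ) ^ (((p + 1 : ℝ) : ℂ) - 1) * (1 - (x : ℂ)) ^ (((q + 1 : ℝ) : ℂ) - 1)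
      = ((x ^ p * (1 - x) ^ q : ℝ) : ℂ) := by
    rw [Complex.ofReal_mul, Complex.ofReal_cpow hx.1.le, Complex.ofReal_cpow hx']
    push_cast
    simp
  simp only [e, RCLike.re_to_complex, Complex.ofReal_re]

theorem integral_rpow_mul_one_sub_rpow {p q : ℝ} (hp : -1 < p) (hq : -1 < q) :
    ∫ x in (0 : ℝ)..1, x ^ p * (1 - x) ^ q = ProbabilityTheory.beta (p + 1) (q + 1) := by
  rw [ProbabilityTheory.beta_eq_betaIntegralReal _ _ (by linarith) (by linarith),
    Complex.betaIntegral]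
  have e : ∫ x in (0 : ℝ)..1, (x : ℂ) ^ (((p + 1 : ℝ) : ℂ) - 1) *
      (1 - (x : ℂ)) ^ (((q + 1 : ℝ) : ℂ) - 1)
      = ∫ x in (0 : ℝ)..1, ((x ^ p * (1 - x) ^ q : ℝ) : ℂ) := by
    refine intervalIntegral.integral_congr fun x hx => ?_
    rw [uIcc_of_le zero_le_one] at hx
    have hx' : (0 : ℝ) ≤ 1 - x := by linarith [hx.2]
    simp only [Complex.ofReal_mul, Complex.ofReal_cpow hx.1, Complex.ofReal_cpow hx']
    push_cast
    simp
  rw [e, intervalIntegral.integral_ofReal, Complex.ofReal_re]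

theorem contDiffAt_one_add_rpow (p : ℝ) {n : WithTop ℕ∞} :
    ContDiffAt ℝ n (fun u : ℝ => (1 + u) ^ p) 0 :=
  (contDiffAt_const.add contDiffAt_id).rpow_const_of_ne (by simp)

theorem hasDerivAt_one_add_rpow (p : ℝ) {t : ℝ} (ht : 0 < 1 + t) :
    HasDerivAt (fun u : ℝ => (1 + u) ^ p) (p * (1 + t) ^ (p - 1)) t := by
  simpa using ((hasDerivAt_id t).const_add 1).rpow_const (p := p) (Or.inl ht.ne')

/-- The elementary part of an antiderivative of `(2 * α + 1) * ((1 + t) ^ α - t ^ α) ^ 2`; the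
remaining part is an incomplete beta integral. -/
noncomputable def cuspBoundary (α t : ℝ) : ℝ :=
  (1 + t) ^ (2 * α + 1) + t ^ (2 * α + 1) - 2 * (t ^ (α + 1) * (1 + t) ^ α)
    - t ^ (α + 1) * (1 + t) ^ (α - 1)

theorem tendsto_cuspBoundary_atTop {α : ℝ} (hα : α < 1 / 2) :
    Tendsto (cuspBoundary α) atTop (𝓝 0) := by
  let h : ℝ → ℝ := fun u => (1 + u) ^ (2 * α + 1) + 1 - 2 * (1 + u) ^ α - u * (1 + u) ^ (α - 1)
  have hA : AnalyticAt ℝ h 0 := by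
    have a1 (p : ℝ) : AnalyticAt ℝ (fun u : ℝ => (1 + u) ^ p) 0 :=
      (contDiffAt_one_add_rpow p).analyticAt
    exact (((a1 _).add analyticAt_const).sub (analyticAt_const.mul (a1 _))).sub
      (analyticAt_id.mul (a1 _))
  have hd : HasDerivAt h 0 0 := by
    have d (p : ℝ) := hasDerivAt_one_add_rpow p (t := 0) (by norm_num)
    have := (((d (2 * α + 1)).add_const 1).sub ((d α).const_mul 2)).sub
      ((hasDerivAt_id (0 : ℝ)).mul (d (α - 1)))
    exact this.congr_deriv (by simp)
  obtain ⟨k, hk, hhk⟩ := (natCast_le_analyticOrderAt (n := 2) hA).1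
    ((natCast_le_analyticOrderAt_iff_iteratedDeriv_eq_zero hA).2 fun i hi => by
      interval_cases i
      · simp [h]; norm_num
      · rw [iteratedDeriv_one]; exact hd.deriv)
  have hinv : Tendsto (fun t : ℝ => t⁻¹) atTop (𝓝 0) := tendsto_inv_atTop_zero
  have h1 : Tendsto (fun t : ℝ => t ^ (2 * α - 1) * k t⁻¹) atTop (𝓝 0) := by
    have := (tendsto_rpow_neg_atTop (y := 1 - 2 * α) (by linarith)).mul
      (hk.continuousAt.tendsto.comp hinv)
    simpa using this
  refine h1.congr' ?_
  filter_upwards [hinv.eventually hhk, eventually_gt_atTop 0] with t ht ht0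
  have e1 : t ^ (2 * α - 1) * k t⁻¹ = t ^ (2 * α + 1) * h t⁻¹ := by
    rw [ht, show 2 * α + 1 = (2 * α - 1) + (2 : ℕ) by push_cast; ring, rpow_add_natCast ht0.ne']
    simp
    field_simp
  have e2 : 1 + t⁻¹ = (1 + t) / t := by field_simp; ring
  have hp : 0 < 1 + t := by linarith
  rw [e1, cuspBoundary]
  simp only [h, e2, div_rpow hp.le ht0.le]
  have c1 : t ^ (2 * α + 1) = t ^ α * t ^ α * t := by
    rw [rpow_add_one ht0.ne', two_mul, rpow_add ht0]
  rw [c1, rpow_add_one ht0.ne', rpow_sub_one ht0.ne']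
  have := (rpow_pos_of_pos ht0 α).ne'
  field_simp


theorem hasDerivAt_cuspBoundary (α : ℝ) {t : ℝ} (ht : 0 < t) :
    HasDerivAt (cuspBoundary α)
      ((2 * α + 1) * ((1 + t) ^ α - t ^ α) ^ 2 - (1 - α) * (t ^ α * (1 + t) ^ (α - 2))) t := by
  have hp : 0 < 1 + t := by linarith
  have d1 (p : ℝ) := hasDerivAt_one_add_rpow p hp
  have d0 (p : ℝ) := hasDerivAt_rpow_const (p := p) (Or.inl ht.ne')
  refine ((((d1 (2 * α + 1)).add (d0 (2 * α + 1))).sub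
    (((d0 (α + 1)).mul (d1 α)).const_mul 2)).sub ((d0 (α + 1)).mul (d1 (α - 1)))).congr_deriv ?_
  have c (x : ℝ) (hx : 0 < x) : x ^ (2 * α) = x ^ α * x ^ α := by rw [two_mul, rpow_add hx]
  have e2 : (1 + t) ^ (α - 2) = (1 + t) ^ α / (1 + t) ^ 2 := by
    rw [← rpow_natCast, ← rpow_sub hp]; norm_num
  simp only [add_sub_cancel_right, c _ ht, c _ hp, rpow_add_one ht.ne',
    show α - 1 - 1 = α - 2 by ring, e2, rpow_sub_one hp.ne']
  field_simp
  ring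

theorem cuspBoundary_zero {α : ℝ} (hα : -(1 / 2) < α) : cuspBoundary α 0 = 1 := by
  rw [cuspBoundary, zero_rpow (by linarith : 2 * α + 1 ≠ 0),
    zero_rpow (by linarith : α + 1 ≠ 0)]
  simp

theorem continuousAt_cuspBoundary_zero {α : ℝ} (hα : -(1 / 2) < α) :
    ContinuousAt (cuspBoundary α) 0 := by
  have d1 (p : ℝ) : ContinuousAt (fun u : ℝ => (1 + u) ^ p) 0 :=
    (contDiffAt_one_add_rpow p (n := 0)).continuousAt
  have d0 (p : ℝ) (hp : 0 ≤ p) : ContinuousAt (fun u : ℝ => u ^ p) 0 :=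
    continuousAt_rpow_const _ _ (Or.inr hp)
  exact ((((d1 _).add (d0 _ (by linarith))).sub
    (continuousAt_const.mul ((d0 _ (by linarith)).mul (d1 _)))).sub
    ((d0 _ (by linarith)).mul (d1 _)))

/-- The increment of the power function is square integrable on the half-line, and its squared
norm is expressed by a beta value. -/
theorem integrableOn_and_integral_sq_rpow_sub_rpow {α : ℝ} (h₁ : -(1 / 2) < α) (h₂ : α < 1 / 2) :
    IntegrableOn (fun t : ℝ => ((1 + t) ^ α - t ^ α) ^ 2) (Ioi 0) ∧
    (2 * α + 1) * ∫ t in Ioi (0 : ℝ), ((1 + t) ^ α - t ^ α) ^ 2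
      = (1 - α) * ProbabilityTheory.beta (α + 1) (1 - 2 * α) - 1 := by
  let w : ℝ → ℝ := fun u => u ^ α * (1 - u) ^ (-(2 * α))
  let β : ℝ → ℝ := fun x => ∫ u in (0 : ℝ)..x, w u
  let s : ℝ → ℝ := fun t => t / (1 + t)
  have hw : IntervalIntegrable w volume 0 1 :=
    intervalIntegrable_rpow_mul_one_sub_rpow (by linarith) (by linarith)
  have hβ : ContinuousOn β (Icc 0 1) := by
    have := intervalIntegral.continuousOn_primitive_interval
      (f := w) (μ := volume) (a := 0) (b := 1)
      (by rw [uIcc_of_le zero_le_one]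
          exact (intervalIntegrable_iff_integrableOn_Icc_of_le zero_le_one).1 hw)
    rwa [uIcc_of_le zero_le_one] at this
  have hs_mem (t : ℝ) (ht : 0 ≤ t) : s t ∈ Icc (0 : ℝ) 1 :=
    ⟨by positivity, (div_le_one (by linarith)).2 (by linarith)⟩
  have hs_deriv (t : ℝ) (ht : 0 ≤ t) : HasDerivAt s (1 / (1 + t) ^ 2) t := by
    refine ((hasDerivAt_id t).div ((hasDerivAt_id t).const_add 1) (by simp; linarith)).congr_deriv
      ?_
    simp
  have hs_top : Tendsto s atTop (𝓝 1) := by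
    have : Tendsto (fun t : ℝ => 1 - (1 + t)⁻¹) atTop (𝓝 (1 - 0)) :=
      tendsto_const_nhds.sub
        (tendsto_inv_atTop_zero.comp (tendsto_atTop_add_const_left _ 1 tendsto_id))
    rw [sub_zero] at this
    refine this.congr' ?_
    filter_upwards [eventually_gt_atTop 0] with t ht
    have : 1 + t ≠ 0 := by linarith
    simp only [s]
    field_simp
    ring
  let Φ : ℝ → ℝ := fun t => cuspBoundary α t + (1 - α) * β (s t)
  have hΦ0 : Φ 0 = 1 := by simp [Φ, s, β, cuspBoundary_zero h₁]
  have hcont : ContinuousWithinAt Φ (Ici 0) 0 := by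
    refine (continuousAt_cuspBoundary_zero h₁).continuousWithinAt.add
      (continuousWithinAt_const.mul ?_)
    exact (hβ (s 0) (hs_mem 0 le_rfl)).comp (hs_deriv 0 le_rfl).continuousAt.continuousWithinAt
      fun t ht => hs_mem t ht
  have hderiv : ∀ t ∈ Ioi (0 : ℝ),
      HasDerivAt Φ ((2 * α + 1) * ((1 + t) ^ α - t ^ α) ^ 2) t := by
    intro t (ht : 0 < t)
    have hp : 0 < 1 + t := by linarith
    have hst0 : 0 < s t := by positivity
    have hst1 : s t < 1 := (div_lt_one hp).2 (by linarith)
    have hwc : ∀ x ∈ Ioo (0 : ℝ) 1, ContinuousAt w x := fun x hx =>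
      (continuousAt_rpow_const _ _ (Or.inl hx.1.ne')).mul
        ((continuousAt_const.sub continuousAt_id).rpow_const (Or.inl (sub_pos.2 hx.2).ne'))
    have hβd : HasDerivAt β (w (s t)) (s t) :=
      intervalIntegral.integral_hasDerivAt_right
        (hw.mono_set (by
          rw [uIcc_of_le zero_le_one, uIcc_of_le hst0.le]; exact Icc_subset_Icc_right hst1.le))
        ((ContinuousOn.stronglyMeasurableAtFilter isOpen_Ioo
          (fun x hx => (hwc x hx).continuousWithinAt)) _ ⟨hst0, hst1⟩)
        (hwc _ ⟨hst0, hst1⟩)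
    refine ((hasDerivAt_cuspBoundary α ht).add
      ((hβd.comp t (hs_deriv t ht.le)).const_mul (1 - α))).congr_deriv ?_
    have e1 : 1 - s t = (1 + t)⁻¹ := by simp only [s]; field_simp; ring
    have e2 : (1 + t) ^ (α - 2) = (1 + t) ^ α / (1 + t) ^ 2 := by
      rw [← rpow_natCast, ← rpow_sub hp]; norm_num
    have e3 : w (s t) = t ^ α * (1 + t) ^ α := by
      simp only [w]
      rw [e1, div_rpow ht.le hp.le, inv_rpow hp.le, ← rpow_neg hp.le, neg_neg, two_mul,
        rpow_add hp]
      have := (rpow_pos_of_pos hp α).ne'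
      field_simp
    rw [e3, e2]
    ring
  have hlim : Tendsto Φ atTop (𝓝 ((1 - α) * ProbabilityTheory.beta (α + 1) (1 - 2 * α))) := by
    have h1 : Tendsto (fun t => β (s t)) atTop (𝓝 (β 1)) :=
      (hβ 1 (by simp)).tendsto.comp (tendsto_nhdsWithin_iff.2 ⟨hs_top,
        (eventually_ge_atTop 0).mono hs_mem⟩)
    have h2 : β 1 = ProbabilityTheory.beta (α + 1) (1 - 2 * α) := by
      simp only [β, w]
      rw [integral_rpow_mul_one_sub_rpow (by linarith) (by linarith)]
      congr 1
      ring
    rw [h2] at h1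
    simpa using (tendsto_cuspBoundary_atTop h₂).add (h1.const_mul (1 - α))
  have hpos : ∀ t ∈ Ioi (0 : ℝ), 0 ≤ (2 * α + 1) * ((1 + t) ^ α - t ^ α) ^ 2 := fun t _ =>
    mul_nonneg (by linarith) (sq_nonneg _)
  constructor
  · refine (integrable_const_mul_iff (IsUnit.mk0 (2 * α + 1) (by linarith)) _).1 ?_
    exact integrableOn_Ioi_deriv_of_nonneg hcont hderiv hpos hlim
  · rw [← integral_const_mul, integral_Ioi_of_hasDerivAt_of_nonneg hcont hderiv hpos hlim, hΦ0]

theorem integral_sq_rpow_sub_rpow {α : ℝ} (h₁ : -(1 / 2) < α) (h₂ : α < 1 / 2) (h₀ : α ≠ 0) :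
    ∫ t in Ioi (0 : ℝ), ((1 + t) ^ α - t ^ α) ^ 2
      = (cos (π * α))⁻¹ * ProbabilityTheory.beta (1 + α) (1 + α) - (2 * α + 1)⁻¹ := by
  have h := (integrableOn_and_integral_sq_rpow_sub_rpow h₁ h₂).2
  have hc : 0 < 2 * α + 1 := by linarith
  have hcos : 0 < cos (π * α) :=
    cos_pos_of_mem_Ioo ⟨by nlinarith [pi_pos], by nlinarith [pi_pos]⟩
  have hsin : sin (π * α) ≠ 0 := by
    intro h0
    obtain ⟨n, hn⟩ := sin_eq_zero_iff.1 h0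
    have h1 : (n : ℝ) = α := by
      have := pi_pos.ne'
      apply mul_right_cancel₀ this
      linarith
    have h3 : (n : ℝ) < 1 := by linarith
    have h4 : (-1 : ℝ) < n := by linarith
    have h5 : n < 1 := by exact_mod_cast h3
    have h6 : -1 < n := by exact_mod_cast h4
    have h7 : n = 0 := by omega
    exact h₀ (by rw [← h1, h7]; simp)
  have g1 : Gamma (1 + α) = α * Gamma α := by rw [add_comm, Gamma_add_one h₀]
  have g2 : Gamma (2 - α) = (1 - α) * Gamma (1 - α) := by
    rw [← Gamma_add_one (by linarith)]; ring_nf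
  have g3 : Gamma (2 + 2 * α) = (2 * α + 1) * Gamma (1 + 2 * α) := by
    rw [add_comm 1, ← Gamma_add_one hc.ne']; ring_nf
  have g4 : Gamma (1 + 2 * α) = 2 * α * Gamma (2 * α) := by
    rw [add_comm, Gamma_add_one (by simpa using h₀)]
  have key : Gamma (1 + 2 * α) * Gamma (1 - 2 * α) * cos (π * α)
      = Gamma (1 + α) * Gamma (1 - α) := by
    have r1 := Gamma_mul_Gamma_one_sub α
    have r2 := Gamma_mul_Gamma_one_sub (2 * α)
    rw [show π * (2 * α) = 2 * (π * α) by ring, sin_two_mul] at r2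
    rw [g1, g4, mul_assoc (2 * α), r2, mul_assoc α, r1]
    have hcos' := hcos.ne'
    generalize cos (π * α) = C at *
    generalize sin (π * α) = S at *
    field_simp
  have p1 : Gamma (1 - α) ≠ 0 := (Gamma_pos_of_pos (by linarith)).ne'
  have p2 : Gamma (1 + 2 * α) ≠ 0 := (Gamma_pos_of_pos (by linarith)).ne'
  have p3 : 1 - α ≠ 0 := by linarith
  have hb : (1 - α) * ProbabilityTheory.beta (α + 1) (1 - 2 * α)
      = (2 * α + 1) * ((cos (π * α))⁻¹ * ProbabilityTheory.beta (1 + α) (1 + α)) := by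
    rw [ProbabilityTheory.beta, ProbabilityTheory.beta, show α + 1 + (1 - 2 * α) = 2 - α by ring,
      show 1 + α + (1 + α) = 2 + 2 * α by ring, g2, g3, add_comm α 1]
    have hc' := hc.ne'
    have hcos' := hcos.ne'
    generalize cos (π * α) = C at *
    generalize 2 * α + 1 = c at *
    generalize 1 - α = e at *
    generalize Gamma (1 + 2 * α) = G at *
    generalize Gamma (1 - 2 * α) = H at *
    field_simp
    linear_combination Gamma (1 + α) * key
  rw [hb] at h
  apply mul_left_cancel₀ hc.ne'
  rw [h]
  field_simp

theorem beta_self_eq {α : ℝ} (h₁ : -(1 / 2) < α) :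
    ProbabilityTheory.beta (1 + α) (1 + α)
      = sqrt π * Gamma (1 + α) / ((2 : ℝ) ^ (2 * α + 1) * Gamma (3 / 2 + α)) := by
  have d := Gamma_mul_Gamma_add_half (1 + α)
  rw [show 1 + α + 1 / 2 = 3 / 2 + α by ring, show 2 * (1 + α) = 2 + 2 * α by ring,
    show 1 - (2 + 2 * α) = -(2 * α + 1) by ring, rpow_neg zero_le_two] at d
  have p1 : Gamma (3 / 2 + α) ≠ 0 := (Gamma_pos_of_pos (by linarith)).ne'
  have p2 : Gamma (2 + 2 * α) ≠ 0 := (Gamma_pos_of_pos (by linarith)).ne'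
  have p3 : (2 : ℝ) ^ (2 * α + 1) ≠ 0 := (rpow_pos_of_pos two_pos _).ne'
  rw [ProbabilityTheory.beta, show 1 + α + (1 + α) = 2 + 2 * α by ring, div_eq_div_iff p2
    (mul_ne_zero p3 p1)]
  have d' : Gamma (1 + α) * Gamma (3 / 2 + α) * 2 ^ (2 * α + 1) = Gamma (2 + 2 * α) * sqrt π := by
    rw [d, mul_right_comm, inv_mul_cancel_right₀ p3]
  linear_combination Gamma (1 + α) * d'

theorem integrableOn_and_integral_sq_rpow_reflect (a b : ℝ) {α : ℝ} (h₁ : -(1 / 2) < α) :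
    IntegrableOn (fun y : ℝ => (b * (1 - y) ^ α - a * y ^ α) ^ 2) (Ioo 0 1) ∧
    ∫ y in Ioo (0 : ℝ) 1, (b * (1 - y) ^ α - a * y ^ α) ^ 2
      = (a ^ 2 + b ^ 2) * (2 * α + 1)⁻¹ - 2 * a * b * ProbabilityTheory.beta (1 + α) (1 + α) := by
  have hc : 2 * α + 1 ≠ 0 := by linarith
  let f : ℝ → ℝ := fun y => y ^ (2 * α)
  let g : ℝ → ℝ := fun y => (1 - y) ^ (2 * α)
  let m : ℝ → ℝ := fun y => y ^ α * (1 - y) ^ α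
  have i1 : IntervalIntegrable f volume 0 1 :=
    intervalIntegral.intervalIntegrable_rpow' (by linarith)
  have i2 : IntervalIntegrable g volume 0 1 := by
    simpa [g] using (i1.comp_sub_left 1).symm
  have i3 : IntervalIntegrable m volume 0 1 :=
    intervalIntegrable_rpow_mul_one_sub_rpow (by linarith) (by linarith)
  have v1 : ∫ y in (0 : ℝ)..1, f y = (2 * α + 1)⁻¹ := by
    simp only [f]
    rw [integral_rpow (Or.inl (by linarith)), one_rpow, zero_rpow hc]
    simp
  have v2 : ∫ y in (0 : ℝ)..1, g y = (2 * α + 1)⁻¹ := by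
    rw [← v1, ← sub_self (1 : ℝ)]
    nth_rewrite 3 [← sub_zero (1 : ℝ)]
    rw [← intervalIntegral.integral_comp_sub_left]
    simp [g, f]
  have v3 : ∫ y in (0 : ℝ)..1, m y = ProbabilityTheory.beta (1 + α) (1 + α) := by
    simp only [m]
    rw [integral_rpow_mul_one_sub_rpow (by linarith) (by linarith), add_comm]
  have hI := ((i1.const_mul (a ^ 2)).add (i2.const_mul (b ^ 2))).sub (i3.const_mul (2 * a * b))
  have hcongr : EqOn (fun y => a ^ 2 * f y + b ^ 2 * g y - 2 * a * b * m y)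
      (fun y : ℝ => (b * (1 - y) ^ α - a * y ^ α) ^ 2) (Ioo 0 1) := by
    intro y hy
    have c (x : ℝ) (hx : 0 < x) : x ^ (2 * α) = x ^ α * x ^ α := by rw [two_mul, rpow_add hx]
    simp only [f, g, m, c y hy.1, c (1 - y) (sub_pos.2 hy.2)]
    ring
  constructor
  · exact IntegrableOn.congr_fun
      ((intervalIntegrable_iff_integrableOn_Ioo_of_le zero_le_one).1 hI) hcongr measurableSet_Ioo
  · rw [← setIntegral_congr_fun measurableSet_Ioo hcongr, ← integral_Ioc_eq_integral_Ioo,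
      ← intervalIntegral.integral_of_le zero_le_one, intervalIntegral.integral_sub
        ((i1.const_mul _).add (i2.const_mul _)) (i3.const_mul _),
      intervalIntegral.integral_add (i1.const_mul _) (i2.const_mul _)]
    simp only [intervalIntegral.integral_const_mul, v1, v2, v3]
    ring

theorem cusp_gamma_closed_form (a b α : ℝ) (ha : 0 ≤ a) (hb : 0 ≤ b)
    (hab : ¬ (a = 0 ∧ b = 0)) (hα : α ∈ Set.Ioo (-(1/2) : ℝ) (1/2)) (hα0 : α ≠ 0) :
    ∫ y : ℝ, (qCusp a b α (y - 1) - qCusp a b α y) ^ 2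
      = (Real.sqrt π * Real.Gamma (1 + α) / ((2 : ℝ) ^ (2 * α + 1) * Real.Gamma (3/2 + α)))
        * ((Real.cos (π * α))⁻¹ * (a ^ 2 + b ^ 2) - 2 * a * b) := by
  obtain ⟨h₁, h₂⟩ := hα
  rw [← beta_self_eq h₁]
  let K : ℝ → ℝ := (Ioi 0).indicator fun t : ℝ => ((1 + t) ^ α - t ^ α) ^ 2
  let M : ℝ → ℝ := (Ioo 0 1).indicator fun y : ℝ => (b * (1 - y) ^ α - a * y ^ α) ^ 2
  obtain ⟨hMi, hM⟩ := integrableOn_and_integral_sq_rpow_reflect a b h₁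
  have hK : Integrable K := (integrable_indicator_iff measurableSet_Ioi).2
    (integrableOn_and_integral_sq_rpow_sub_rpow h₁ h₂).1
  have hM' : Integrable M := (integrable_indicator_iff measurableSet_Ioo).2 hMi
  have hae : (fun y => (qCusp a b α (y - 1) - qCusp a b α y) ^ 2)
      =ᵐ[volume] fun y => a ^ 2 * K (y - 1) + b ^ 2 * K (-y) + M y := by
    filter_upwards [compl_mem_ae_iff.2 (measure_singleton (0 : ℝ)),
      compl_mem_ae_iff.2 (measure_singleton (1 : ℝ))] with y hy0 hy1
    have hy0 : y ≠ 0 := hy0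
    have hy1 : y ≠ 1 := hy1
    simp only [K, M, qCusp, indicator_apply, mem_Ioi, mem_Ioo]
    rcases lt_or_gt_of_ne hy0 with h | h
    · rw [if_neg (by linarith), if_neg (by linarith), if_neg (by linarith), if_pos (by linarith),
        if_neg (by rintro ⟨_, _⟩; linarith), abs_of_neg h, abs_of_neg (by linarith),
        show -(y - 1) = 1 + -y by ring]
      ring
    rcases lt_or_gt_of_ne hy1 with h' | h'
    · rw [if_neg (by linarith), if_pos h.le, if_neg (by linarith), if_neg (by linarith),
        if_pos ⟨h, h'⟩, abs_of_pos h, abs_of_neg (by linarith), neg_sub]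
      ring
    · rw [if_pos (by linarith), if_pos h.le, if_pos (by linarith), if_neg (by linarith),
        if_neg (by rintro ⟨_, _⟩; linarith), abs_of_pos h, abs_of_pos (by linarith),
        show 1 + (y - 1) = y by ring]
      ring
  have j1 : Integrable fun y => a ^ 2 * K (y - 1) := (hK.comp_sub_right 1).const_mul _
  have j2 : Integrable fun y => b ^ 2 * K (-y) := hK.comp_neg.const_mul _
  have j3 : Integrable fun y => a ^ 2 * K (y - 1) + b ^ 2 * K (-y) := j1.add j2
  rw [integral_congr_ae hae, integral_add j3 hM', integral_add j1 j2,
    integral_const_mul, integral_const_mul, integral_sub_right_eq_self K,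
    integral_neg_eq_self K, integral_indicator measurableSet_Ioi,
    integral_indicator measurableSet_Ioo, hM, integral_sq_rpow_sub_rpow h₁ h₂ hα0]
  ring
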